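/- Let V ∈ L^∞(ℝ) with v₀ := ess inf_{x∈ℝ} V(x) > 0 and v₁ := ess sup_{x∈ℝ} V(x), fix a ∈ ℝ, and let u_a ∈ K_a be the unique minimizer of u ↦ ‖u‖_V² over K_a. Then (v₀/√v₁) e^{−√v₁ |x−a|} ≤ sgn(a−x) · u_a′(x) ≤ (v₁/√v₀) e^{−√v₀ |x−a|} holds for all x ∈ ℝ∖{a} (at points where u_a′ exists; u_a′ is defined a.e. and the bounds hold a.e. on ℝ∖{a}). -/

import Mathlib

open MeasureTheory Filter Real Topology

/-- The supremum norm `‖u‖_∞` of a (bounded continuous) function `u : ℝ → ℝ`. -/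
noncomputable def supNorm (u : ℝ → ℝ) : ℝ := ⨆ x : ℝ, |u x|

/-- `u` is (the continuous representative of) an element of `H¹(ℝ)`:
`u` is continuous, `u ∈ L²(ℝ)`, and there is a weak derivative `u' ∈ L²(ℝ)`,
i.e. `u x = u 0 + ∫_0^x u'`. -/
def IsH1 (u : ℝ → ℝ) : Prop :=
  Continuous u ∧ MemLp u 2 (volume : Measure ℝ) ∧
    ∃ u' : ℝ → ℝ, MemLp u' 2 (volume : Measure ℝ) ∧
      ∀ x : ℝ, u x = u 0 + ∫ t in (0:ℝ)..x, u' t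

/-- The Dirichlet energy `∫_ℝ |u'(x)|² dx`.  (For `u ∈ H¹(ℝ)` the classical
derivative `deriv u` exists a.e. and coincides a.e. with the weak derivative.) -/
noncomputable def energy (u : ℝ → ℝ) : ℝ := ∫ x : ℝ, (deriv u x) ^ 2

/-- `I(u;V) = ∫_ℝ (|u'(x)|² + V(x)|u(x)|²) dx` for a potential `V : ℝ → ℝ`. -/
noncomputable def IV (V : ℝ → ℝ) (u : ℝ → ℝ) : ℝ :=
  ∫ x : ℝ, ((deriv u x) ^ 2 + V x * (u x) ^ 2)

/-- Membership in `K_a = { u ∈ H¹(ℝ) ; u(a) = ‖u‖_∞ = 1 }`. -/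
def InKa (a : ℝ) (u : ℝ → ℝ) : Prop := IsH1 u ∧ u a = 1 ∧ supNorm u = 1

/-- `F(a;V) = inf { I(u;V) ; u ∈ K_a }`. -/
noncomputable def FV (V : ℝ → ℝ) (a : ℝ) : ℝ :=
  sInf {r : ℝ | ∃ u : ℝ → ℝ, InKa a u ∧ r = IV V u}

/-- `m(V) = inf { I(u;V)/‖u‖_∞² ; u ∈ H¹(ℝ), u ≢ 0 }`. -/
noncomputable def mV (V : ℝ → ℝ) : ℝ :=
  sInf {r : ℝ | ∃ u : ℝ → ℝ, IsH1 u ∧ u ≠ 0 ∧ r = IV V u / (supNorm u) ^ 2}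

/-!
Truncating values to `[0, 1]` maps `{u ∈ H¹ : u a = 1}` into `K_a` without raising the energy, so
the minimizer over `K_a` also minimizes over that affine space and solves `u'' = V u` weakly away
from `a`.  Testing with the negative part of `u` gives `u ≥ 0`.  Testing with the function `φ`
vanishing at `a` and solving `φ' + k φ = e^{-kt} g`, where `g ≥ 0` is supported in `(a, ∞)`, gives
`∫ (u' + k u) e^{-kt} g = -∫ (V - k²) u φ`.  Hence `u' + k u` has a constant sign on `(a, ∞)` as
soon as `V - k²` has one: it is `≤ 0` for `k = √v₀` and `≥ 0` for `k = √v₁`.  By Grönwall these two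
inequalities enclose `u` between two exponentials, and inserting that back into them bounds `u'`.
The left half-line follows by reflection.
-/

section RealFunctions

variable {f g : ℝ → ℝ} {a b k x : ℝ}

theorem div_sqrt_le_sqrt {x y : ℝ} (hx : 0 < x) (hxy : x ≤ y) : x / √y ≤ √x :=
  calc x / √y ≤ x / √x := by gcongr
    _ = √x := div_sqrt

theorem sqrt_le_div_sqrt {x y : ℝ} (hx : 0 < x) (hxy : x ≤ y) : √y ≤ y / √x := by
  have hy : 0 ≤ y := hx.le.trans hxy
  calc √y = y / √y := div_sqrt.symm
    _ ≤ y / √x := by gcongr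

theorem ae_essInf_le_of_memLp_top {α : Type*} [MeasurableSpace α] {μ : Measure α} {V : α → ℝ}
    (hV : MemLp V ⊤ μ) : ∀ᵐ x ∂μ, essInf V μ ≤ V x :=
  ae_essInf_le ⟨-lpNorm V ⊤ μ,
    eventually_map.2 ((ae_le_lpNorm_exponent_top hV).mono fun _ hx => (abs_le.1 hx).1)⟩

theorem ae_le_essSup_of_memLp_top {α : Type*} [MeasurableSpace α] {μ : Measure α} {V : α → ℝ}
    (hV : MemLp V ⊤ μ) : ∀ᵐ x ∂μ, V x ≤ essSup V μ :=
  ae_le_essSup ⟨lpNorm V ⊤ μ,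
    eventually_map.2 ((ae_le_lpNorm_exponent_top hV).mono fun _ hx => (abs_le.1 hx).2)⟩

theorem abs_deriv_lipschitz_comp_le {K : NNReal} (hg : LipschitzWith K g)
    (hf : DifferentiableAt ℝ f x) : |deriv (fun y => g (f y)) x| ≤ K * |deriv f x| := by
  by_cases hgf : DifferentiableAt ℝ (fun y => g (f y)) x
  · have hslope := hasDerivAt_iff_tendsto_slope.1 hf.hasDerivAt
    have hslope' := hasDerivAt_iff_tendsto_slope.1 hgf.hasDerivAt
    refine le_of_tendsto_of_tendsto' hslope'.abs (hslope.abs.const_mul _) fun y => ?_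
    rw [slope_def_field, slope_def_field, abs_div, abs_div, ← mul_div_assoc]
    gcongr
    exact hg.dist_le_mul _ _
  · rw [deriv_zero_of_not_differentiableAt hgf, abs_zero]
    positivity

theorem deriv_mul_deriv_antitone_comp_nonpos (hg : Antitone g) (hf : DifferentiableAt ℝ f x) :
    deriv f x * deriv (fun y => g (f y)) x ≤ 0 := by
  by_cases hgf : DifferentiableAt ℝ (fun y => g (f y)) x
  · have hslope := hasDerivAt_iff_tendsto_slope.1 hf.hasDerivAt
    have hslope' := hasDerivAt_iff_tendsto_slope.1 hgf.hasDerivAt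
    refine le_of_tendsto' (hslope.mul hslope') fun y => ?_
    rw [slope_def_field, slope_def_field, div_mul_div_comm]
    refine div_nonpos_of_nonpos_of_nonneg ?_ (mul_self_nonneg _)
    rcases le_total (f x) (f y) with h | h
    · exact mul_nonpos_of_nonneg_of_nonpos (sub_nonneg.2 h) (sub_nonpos.2 (hg h))
    · exact mul_nonpos_of_nonpos_of_nonneg (sub_nonpos.2 h) (sub_nonneg.2 (hg h))
  · rw [deriv_zero_of_not_differentiableAt hgf, mul_zero]

theorem absolutelyContinuousOnInterval_lipschitz_comp {K : NNReal} (hg : LipschitzWith K g)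
    (hf : AbsolutelyContinuousOnInterval f a b) :
    AbsolutelyContinuousOnInterval (fun x => g (f x)) a b := by
  refine squeeze_zero (fun E => Finset.sum_nonneg fun i _ => dist_nonneg) (fun E => ?_)
    (by simpa only [mul_zero] using Tendsto.const_mul (K : ℝ) hf)
  rw [Finset.mul_sum]
  exact Finset.sum_le_sum fun i _ => hg.dist_le_mul _ _

theorem continuous_of_forall_absolutelyContinuousOnInterval
    (hf : ∀ a b, AbsolutelyContinuousOnInterval f a b) : Continuous f :=
  continuous_iff_continuousAt.2 fun x =>
    (hf (x - 1) (x + 1)).continuousOn.continuousAt <| by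
      rw [Set.uIcc_of_le (by linarith)]
      exact Icc_mem_nhds (by linarith) (by linarith)

theorem absolutelyContinuousOnInterval_integral_of_locallyIntegrable (hg : LocallyIntegrable g)
    (c a b : ℝ) : AbsolutelyContinuousOnInterval (fun x => ∫ t in c..x, g t) a b := by
  have hint (x y : ℝ) : IntervalIntegrable g volume x y :=
    (hg.integrableOn_isCompact isCompact_uIcc).intervalIntegrable
  have hsplit : (fun x => ∫ t in c..x, g t) = fun x => (∫ t in c..a, g t) + ∫ t in a..x, g t :=
    funext fun x =>
      (intervalIntegral.integral_add_adjacent_intervals (hint c a) (hint a x)).symm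
  rw [hsplit]
  exact (LipschitzWith.const _).lipschitzOnWith.absolutelyContinuousOnInterval.fun_add
    ((hint a b).absolutelyContinuousOnInterval_intervalIntegral Set.left_mem_uIcc)

theorem ae_differentiableAt_of_forall_absolutelyContinuousOnInterval
    (hf : ∀ a b, AbsolutelyContinuousOnInterval f a b) : ∀ᵐ x, DifferentiableAt ℝ f x := by
  have hf_nat : ∀ᵐ x, ∀ n : ℕ, x ∈ Set.uIcc (-(n : ℝ)) n → DifferentiableAt ℝ f x :=
    ae_all_iff.2 fun n => (hf (-n) n).ae_differentiableAt
  filter_upwards [hf_nat] with x hx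
  obtain ⟨n, hn⟩ := exists_nat_ge |x|
  refine hx n ?_
  rw [Set.uIcc_of_le (by linarith [abs_nonneg x])]
  exact abs_le.1 hn

theorem le_of_ae_deriv_nonpos (hab : a ≤ b) (hf : AbsolutelyContinuousOnInterval f a b)
    (hderiv : ∀ᵐ x, x ∈ Set.Ioc a b → deriv f x ≤ 0) : f b ≤ f a := by
  rw [← sub_nonpos, ← hf.integral_deriv_eq_sub, intervalIntegral.integral_of_le hab]
  exact setIntegral_nonpos_ae measurableSet_Ioc hderiv

theorem le_mul_exp_of_ae_deriv_add_mul_nonpos (hab : a ≤ b)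
    (hf : AbsolutelyContinuousOnInterval f a b)
    (hderiv : ∀ᵐ x, x ∈ Set.Ioc a b → deriv f x + k * f x ≤ 0) :
    f b ≤ f a * exp (-k * (b - a)) := by
  have hexp (x : ℝ) : HasDerivAt (fun x => exp (k * (x - a))) (exp (k * (x - a)) * k) x := by
    simpa only [mul_one] using (((hasDerivAt_id' x).sub_const a).const_mul k).exp
  have hac : AbsolutelyContinuousOnInterval (fun x => exp (k * (x - a))) a b :=
    ContDiffOn.absolutelyContinuousOnInterval (by fun_prop)
  have hmono : f b * exp (k * (b - a)) ≤ f a * exp (k * (a - a)) := by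
    refine le_of_ae_deriv_nonpos hab (hf.fun_mul hac) ?_
    filter_upwards [hf.ae_differentiableAt, hderiv] with x hfx hx hxab
    have hxab' : x ∈ Set.uIcc a b := Set.Icc_subset_uIcc (Set.Ioc_subset_Icc_self hxab)
    rw [((hfx hxab').hasDerivAt.fun_mul (hexp x)).deriv]
    calc deriv f x * exp (k * (x - a)) + f x * (exp (k * (x - a)) * k)
        = exp (k * (x - a)) * (deriv f x + k * f x) := by ring
      _ ≤ 0 := mul_nonpos_of_nonneg_of_nonpos (exp_pos _).le (hx hxab)
  rw [sub_self, mul_zero, exp_zero, mul_one] at hmono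
  rwa [neg_mul, exp_neg, ← div_eq_mul_inv, le_div_iff₀ (exp_pos _)]

-- The limit of `f R - f (-R)` as `R → ∞` exists, and must vanish because `f` is integrable.
theorem integral_deriv_eq_zero (hac : ∀ a b, AbsolutelyContinuousOnInterval f a b)
    (hf : Integrable f) (hf' : Integrable (deriv f)) : ∫ x, deriv f x = 0 := by
  have hlim : Tendsto (fun R => f R - f (-R)) atTop (𝓝 (∫ x, deriv f x)) :=
    (intervalIntegral_tendsto_integral hf' tendsto_neg_atTop_atBot tendsto_id).congr
      fun R => (hac (-R) R).integral_deriv_eq_sub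
  have hint : Integrable fun R => f R - f (-R) := hf.sub hf.comp_neg
  refine (hint.integrableAtFilter atTop).eq_zero_of_tendsto (fun s hs => ?_) hlim
  obtain ⟨b, hb⟩ := mem_atTop_sets.1 hs
  exact measure_mono_top hb volume_Ici

theorem memLp_indicator_exp_neg (hk : 0 < k) (a : ℝ) :
    MemLp ((Set.Ioi a).indicator fun t => exp (-k * t)) 2 := by
  rw [memLp_indicator_iff_restrict measurableSet_Ioi, memLp_two_iff_integrable_sq (by fun_prop)]
  refine (exp_neg_integrableOn_Ioi a (b := 2 * k) (by positivity)).congr (ae_of_all _ fun t => ?_)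
  simp only [← exp_nat_mul]
  congr 1
  push_cast
  ring

end RealFunctions

section SobolevSpace

variable {u w : ℝ → ℝ}

theorem IsH1.absolutelyContinuousOnInterval (hu : IsH1 u) (a b : ℝ) :
    AbsolutelyContinuousOnInterval u a b := by
  obtain ⟨-, -, u', hu', hint⟩ := hu
  rw [funext hint]
  exact (LipschitzWith.const (u 0)).lipschitzOnWith.absolutelyContinuousOnInterval.fun_add
    (absolutelyContinuousOnInterval_integral_of_locallyIntegrable
      (hu'.locallyIntegrable one_le_two) 0 a b)

theorem IsH1.ae_differentiableAt (hu : IsH1 u) : ∀ᵐ x, DifferentiableAt ℝ u x :=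
  ae_differentiableAt_of_forall_absolutelyContinuousOnInterval hu.absolutelyContinuousOnInterval

theorem IsH1.memLp (hu : IsH1 u) : MemLp u 2 := hu.2.1

theorem IsH1.memLp_deriv (hu : IsH1 u) : MemLp (deriv u) 2 := by
  obtain ⟨-, -, u', hu', hint⟩ := hu
  refine hu'.ae_eq ?_
  filter_upwards [LocallyIntegrable.ae_hasDerivAt_integral (hu'.locallyIntegrable one_le_two)]
    with x hx
  rw [funext hint]
  exact ((hx 0).const_add (u 0)).deriv.symm

theorem isH1_of_absolutelyContinuousOnInterval
    (hac : ∀ a b, AbsolutelyContinuousOnInterval u a b)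
    (hu : MemLp u 2) (hu' : MemLp (deriv u) 2) : IsH1 u :=
  ⟨continuous_of_forall_absolutelyContinuousOnInterval hac, hu, deriv u, hu', fun x => by
    rw [(hac 0 x).integral_deriv_eq_sub, add_sub_cancel]⟩

theorem IsH1.add_const_mul (hu : IsH1 u) (hw : IsH1 w) (t : ℝ) : IsH1 fun x => u x + t * w x := by
  refine isH1_of_absolutelyContinuousOnInterval
    (fun a b => (hu.absolutelyContinuousOnInterval a b).fun_add
      ((hw.absolutelyContinuousOnInterval a b).const_mul t))
    (hu.memLp.add (hw.memLp.const_mul t)) ?_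
  refine (hu.memLp_deriv.add (hw.memLp_deriv.const_mul t)).ae_eq ?_
  filter_upwards [hu.ae_differentiableAt, hw.ae_differentiableAt] with x hux hwx
  exact (hux.hasDerivAt.add (hwx.hasDerivAt.const_mul t)).deriv.symm

theorem IsH1.comp_neg (hu : IsH1 u) : IsH1 fun x => u (-x) := by
  have hmp := Measure.measurePreserving_neg (volume : Measure ℝ)
  obtain ⟨hcont, hmem, u', hu', hint⟩ := hu
  refine ⟨hcont.comp continuous_neg, hmem.comp_measurePreserving hmp, fun t => -u' (-t),
    (hu'.comp_measurePreserving hmp).neg, fun x => ?_⟩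
  rw [intervalIntegral.integral_neg, intervalIntegral.integral_comp_neg,
    ← intervalIntegral.integral_symm]
  simpa only [neg_zero] using hint (-x)

theorem IsH1.lipschitz_comp {g : ℝ → ℝ} {K : NNReal} (hu : IsH1 u) (hg : LipschitzWith K g)
    (hg0 : g 0 = 0) : IsH1 fun x => g (u x) := by
  refine isH1_of_absolutelyContinuousOnInterval
    (fun a b => absolutelyContinuousOnInterval_lipschitz_comp hg
      (hu.absolutelyContinuousOnInterval a b))
    (hg.comp_memLp hg0 hu.memLp) ?_
  refine hu.memLp_deriv.of_le_mul (c := K) (measurable_deriv _).aestronglyMeasurable ?_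
  filter_upwards [hu.ae_differentiableAt] with x hx using abs_deriv_lipschitz_comp_le hg hx

theorem IsH1.integral_deriv_mul_add_mul_deriv_eq_zero (hu : IsH1 u) (hw : IsH1 w) :
    ∫ x, (deriv u x * w x + u x * deriv w x) = 0 := by
  have hderiv : deriv (fun x => u x * w x) =ᵐ[volume]
      fun x => deriv u x * w x + u x * deriv w x := by
    filter_upwards [hu.ae_differentiableAt, hw.ae_differentiableAt] with x hux hwx
    exact (hux.hasDerivAt.mul hwx.hasDerivAt).deriv
  rw [← integral_congr_ae hderiv]
  refine integral_deriv_eq_zero (fun a b => (hu.absolutelyContinuousOnInterval a b).fun_mul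
    (hw.absolutelyContinuousOnInterval a b)) (hu.memLp.integrable_mul hw.memLp) ?_
  exact ((hu.memLp_deriv.integrable_mul hw.memLp).add
    (hu.memLp.integrable_mul hw.memLp_deriv)).congr hderiv.symm

end SobolevSpace

section EnergyForm

variable {V u w : ℝ → ℝ} {a : ℝ}

/-- The bilinear form `∫ (u' w' + V u w)` whose quadratic form is `IV V`. -/
noncomputable def energyForm (V u w : ℝ → ℝ) : ℝ :=
  ∫ x, (deriv u x * deriv w x + V x * (u x * w x))

/-- `u` satisfies `u'' = V u` on `ℝ ∖ {a}` in the weak sense, the test functions being all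
`w ∈ H¹(ℝ)` with `w a = 0`. -/
def IsWeakSolutionOff (V : ℝ → ℝ) (a : ℝ) (u : ℝ → ℝ) : Prop :=
  ∀ w, IsH1 w → w a = 0 → energyForm V u w = 0

theorem energyForm_comp_neg (V u w : ℝ → ℝ) :
    energyForm (fun x => V (-x)) (fun x => u (-x)) w = energyForm V u (fun x => w (-x)) := by
  unfold energyForm
  rw [← integral_neg_eq_self]
  simp only [deriv_comp_neg, neg_neg, neg_mul, mul_neg]

theorem integrable_energyForm (hV : MemLp V ⊤) (hu : IsH1 u) (hw : IsH1 w) :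
    Integrable fun x => deriv u x * deriv w x + V x * (u x * w x) :=
  (hu.memLp_deriv.integrable_mul hw.memLp_deriv).add
    ((hu.memLp.integrable_mul hw.memLp).mul_of_top_right hV)

theorem integrable_IV (hV : MemLp V ⊤) (hu : IsH1 u) :
    Integrable fun x => deriv u x ^ 2 + V x * u x ^ 2 := by
  simpa only [sq] using integrable_energyForm hV hu hu

theorem IV_add_const_mul (hV : MemLp V ⊤) (hu : IsH1 u) (hw : IsH1 w) (t : ℝ) :
    IV V (fun x => u x + t * w x) = IV V u + 2 * t * energyForm V u w + t ^ 2 * IV V w := by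
  have huu := integrable_IV hV hu
  have huw := (integrable_energyForm hV hu hw).const_mul (2 * t)
  have hww := (integrable_IV hV hw).const_mul (t ^ 2)
  simp only [IV, energyForm]
  rw [← integral_const_mul, ← integral_const_mul, ← integral_add huu huw,
    ← integral_add (huu.fun_add huw) hww]
  refine integral_congr_ae ?_
  filter_upwards [hu.ae_differentiableAt, hw.ae_differentiableAt] with x hux hwx
  rw [(hux.hasDerivAt.fun_add (hwx.hasDerivAt.const_mul t)).deriv]
  ring

theorem IV_lipschitz_comp_le {g : ℝ → ℝ} (hV : MemLp V ⊤) (hV0 : ∀ᵐ x, 0 ≤ V x) (hu : IsH1 u)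
    (hg : LipschitzWith 1 g) (hg0 : g 0 = 0) : IV V (fun x => g (u x)) ≤ IV V u := by
  refine integral_mono_ae (integrable_IV hV (hu.lipschitz_comp hg hg0)) (integrable_IV hV hu) ?_
  filter_upwards [hV0, hu.ae_differentiableAt] with x hVx hux
  have hderiv : deriv (fun x => g (u x)) x ^ 2 ≤ deriv u x ^ 2 :=
    sq_le_sq.2 (by simpa using abs_deriv_lipschitz_comp_le hg hux)
  have hval : g (u x) ^ 2 ≤ u x ^ 2 :=
    sq_le_sq.2 (by simpa [hg0, dist_eq] using hg.dist_le_mul (u x) 0)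
  gcongr

theorem energyForm_eq_zero_of_forall_IV_le (hV : MemLp V ⊤) (hu : IsH1 u) (hw : IsH1 w)
    (hmin : ∀ t : ℝ, IV V u ≤ IV V fun x => u x + t * w x) : energyForm V u w = 0 := by
  have hquad (t : ℝ) : 0 ≤ IV V w * (t * t) + 2 * energyForm V u w * t + 0 := by
    linarith [hmin t, IV_add_const_mul hV hu hw t]
  have hdiscrim := discrim_le_zero hquad
  rw [discrim, mul_zero, sub_zero] at hdiscrim
  simpa using le_antisymm hdiscrim (sq_nonneg _)

theorem exists_inKa_IV_le (hV : MemLp V ⊤) (hV0 : ∀ᵐ x, 0 ≤ V x) (hu : IsH1 u) (ha : u a = 1) :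
    ∃ w, InKa a w ∧ IV V w ≤ IV V u := by
  have hg : LipschitzWith 1 fun y : ℝ => max 0 (min 1 y) :=
    (LipschitzWith.id.const_min 1).const_max 0
  have hbound (y : ℝ) : |max 0 (min 1 y)| ≤ 1 := by
    rw [abs_of_nonneg (le_max_left _ _)]
    exact max_le zero_le_one (min_le_left _ _)
  refine ⟨fun x => max 0 (min 1 (u x)), ⟨hu.lipschitz_comp hg (by simp), by simp [ha], ?_⟩,
    IV_lipschitz_comp_le hV hV0 hu hg (by simp)⟩
  refine le_antisymm (ciSup_le fun x => hbound (u x)) ?_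
  refine le_ciSup_of_le ⟨1, Set.forall_mem_range.2 fun x => hbound (u x)⟩ a ?_
  simp [ha]

theorem isWeakSolutionOff_of_minimizer (hV : MemLp V ⊤) (hV0 : ∀ᵐ x, 0 ≤ V x) (hu : InKa a u)
    (hmin : ∀ w, InKa a w → IV V u ≤ IV V w) : IsWeakSolutionOff V a u := by
  intro w hw hwa
  refine energyForm_eq_zero_of_forall_IV_le hV hu.1 hw fun t => ?_
  obtain ⟨v, hv, hle⟩ := exists_inKa_IV_le (a := a) hV hV0 (hu.1.add_const_mul hw t)
    (by rw [hwa, mul_zero, add_zero, hu.2.1])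
  exact (hmin v hv).trans hle

end EnergyForm

section WeakSolution

variable {V u φ g : ℝ → ℝ} {a c k : ℝ}

theorem IsWeakSolutionOff.comp_neg (hsol : IsWeakSolutionOff V a u) :
    IsWeakSolutionOff (fun x => V (-x)) (-a) (fun x => u (-x)) := fun w hw hwa => by
  rw [energyForm_comp_neg]
  exact hsol _ hw.comp_neg hwa

theorem IsWeakSolutionOff.nonneg (hsol : IsWeakSolutionOff V a u) (hV : MemLp V ⊤)
    (hVpos : ∀ᵐ x, 0 < V x) (hu : IsH1 u) (ha : 0 ≤ u a) (x : ℝ) : 0 ≤ u x := by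
  have hneg : IsH1 fun x => (u x)⁻ := hu.lipschitz_comp lipschitzWith_negPart negPart_zero
  have hnegV : Integrable fun x => V x * (u x)⁻ ^ 2 := hneg.memLp.integrable_sq.mul_of_top_right hV
  have hle : ∫ x, V x * (u x)⁻ ^ 2 ≤ -energyForm V u fun x => (u x)⁻ := by
    rw [energyForm, ← integral_neg]
    refine integral_mono_ae hnegV (integrable_energyForm hV hu hneg).neg ?_
    filter_upwards [hu.ae_differentiableAt] with x hx
    have hderiv := deriv_mul_deriv_antitone_comp_nonpos negPart_anti hx
    have hmul : u x * (u x)⁻ = -(u x)⁻ ^ 2 := by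
      rcases le_total 0 (u x) with h | h
      · simp [negPart_of_nonneg h]
      · simp [negPart_of_nonpos h, sq]
    rw [hmul]
    linarith
  rw [hsol _ hneg (negPart_of_nonneg ha), neg_zero] at hle
  have hnonneg : 0 ≤ᵐ[volume] fun x => V x * (u x)⁻ ^ 2 := by
    filter_upwards [hVpos] with x hx
    exact mul_nonneg hx.le (sq_nonneg _)
  have hzero : (fun x => (u x)⁻) =ᵐ[volume] fun _ => 0 := by
    filter_upwards [(integral_eq_zero_iff_of_nonneg_ae hnonneg hnegV).1
      (hle.antisymm (integral_nonneg_of_ae hnonneg)), hVpos] with x hx hVx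
    simpa [hVx.ne'] using hx
  exact negPart_eq_zero.1 (congrFun (hneg.1.ae_eq_iff_eq volume continuous_const |>.1 hzero) x)

-- Add `k` times `∫ (u φ)' = 0` to the weak formulation.
theorem IsWeakSolutionOff.integral_deriv_add_mul (hsol : IsWeakSolutionOff V a u) (hV : MemLp V ⊤)
    (hu : IsH1 u) (hφ : IsH1 φ) (hφa : φ a = 0) (k : ℝ) :
    ∫ x, (deriv u x + k * u x) * (deriv φ x + k * φ x) =
      -∫ x, (V x - k ^ 2) * (u x * φ x) := by
  have hform := integrable_energyForm hV hu hφ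
  have hparts : Integrable fun x => k * (deriv u x * φ x + u x * deriv φ x) :=
    ((hu.memLp_deriv.integrable_mul hφ.memLp).add
      (hu.memLp.integrable_mul hφ.memLp_deriv)).const_mul k
  have hpot : Integrable fun x => (V x - k ^ 2) * (u x * φ x) :=
    (hu.memLp.integrable_mul hφ.memLp).mul_of_top_right (hV.sub (memLp_top_const _))
  calc ∫ x, (deriv u x + k * u x) * (deriv φ x + k * φ x)
      = ∫ x, ((deriv u x * deriv φ x + V x * (u x * φ x)) +
          k * (deriv u x * φ x + u x * deriv φ x) - (V x - k ^ 2) * (u x * φ x)) := by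
        congr 1 with x
        ring
    _ = energyForm V u φ + k * (∫ x, (deriv u x * φ x + u x * deriv φ x)) -
          ∫ x, (V x - k ^ 2) * (u x * φ x) := by
        rw [integral_sub (hform.fun_add hparts) hpot, integral_add hform hparts, integral_const_mul,
          energyForm]
    _ = -∫ x, (V x - k ^ 2) * (u x * φ x) := by
        rw [hsol φ hφ hφa, hu.integral_deriv_mul_add_mul_deriv_eq_zero hφ]
        ring

/-- The solution `φ` of `φ' + k φ = e^{-kt} g` with `φ a = 0`, used as a test function. -/
noncomputable def expPrimitive (k a : ℝ) (g : ℝ → ℝ) (t : ℝ) : ℝ :=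
  exp (-k * t) * ∫ s in a..t, g s

theorem expPrimitive_self (k a : ℝ) (g : ℝ → ℝ) : expPrimitive k a g a = 0 := by
  rw [expPrimitive, intervalIntegral.integral_same, mul_zero]

theorem expPrimitive_eq_zero_of_le (hg : ∀ s ≤ a, g s = 0) {t : ℝ} (ht : t ≤ a) :
    expPrimitive k a g t = 0 := by
  have hzero : Set.EqOn g (fun _ => 0) (Set.uIcc a t) := fun s hs =>
    hg s (Set.uIcc_of_ge ht ▸ hs).2
  rw [expPrimitive, intervalIntegral.integral_congr hzero, intervalIntegral.integral_zero, mul_zero]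

theorem expPrimitive_nonneg (hg0 : ∀ s, 0 ≤ g s) (hg : ∀ s ≤ a, g s = 0) (t : ℝ) :
    0 ≤ expPrimitive k a g t := by
  rcases le_total t a with ht | ht
  · rw [expPrimitive_eq_zero_of_le hg ht]
  · exact mul_nonneg (exp_pos _).le (intervalIntegral.integral_nonneg ht fun s _ => hg0 s)

theorem ae_deriv_expPrimitive_add (hg : LocallyIntegrable g) :
    ∀ᵐ t, deriv (expPrimitive k a g) t + k * expPrimitive k a g t = exp (-k * t) * g t := by
  filter_upwards [LocallyIntegrable.ae_hasDerivAt_integral hg] with t ht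
  have hexp : HasDerivAt (fun t => exp (-k * t)) (exp (-k * t) * -k) t := by
    simpa only [mul_one] using ((hasDerivAt_id' t).const_mul (-k)).exp
  have hderiv : deriv (expPrimitive k a g) t = _ := (hexp.mul (ht a)).deriv
  rw [hderiv, expPrimitive]
  ring

theorem absolutelyContinuousOnInterval_expPrimitive (hg : LocallyIntegrable g) (x y : ℝ) :
    AbsolutelyContinuousOnInterval (expPrimitive k a g) x y := by
  have hexp : AbsolutelyContinuousOnInterval (fun t => exp (-k * t)) x y :=
    ContDiffOn.absolutelyContinuousOnInterval (by fun_prop)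
  exact hexp.fun_mul (absolutelyContinuousOnInterval_integral_of_locallyIntegrable hg a x y)

theorem memLp_expPrimitive (hk : 0 < k) (hg : Integrable g) (hg0 : ∀ s ≤ a, g s = 0) :
    MemLp (expPrimitive k a g) 2 := by
  refine (memLp_indicator_exp_neg hk a).of_le_mul (c := ∫ s, ‖g s‖)
    (continuous_of_forall_absolutelyContinuousOnInterval
      (absolutelyContinuousOnInterval_expPrimitive hg.locallyIntegrable)).aestronglyMeasurable
    (ae_of_all _ fun t => ?_)
  rcases le_or_gt t a with ht | ht
  · rw [expPrimitive_eq_zero_of_le hg0 ht, norm_zero]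
    positivity
  · rw [expPrimitive, norm_mul, mul_comm, Set.indicator_of_mem (Set.mem_Ioi.2 ht)]
    gcongr
    exact (intervalIntegral.norm_integral_le_integral_norm_uIoc).trans
      (setIntegral_le_integral hg.norm (ae_of_all _ fun s => norm_nonneg _))

theorem isH1_expPrimitive (hk : 0 < k) (hg : Integrable g) (hg_top : MemLp g ⊤)
    (hg0 : ∀ s ≤ a, g s = 0) : IsH1 (expPrimitive k a g) := by
  have hmem := memLp_expPrimitive hk hg hg0
  refine isH1_of_absolutelyContinuousOnInterval
    (absolutelyContinuousOnInterval_expPrimitive hg.locallyIntegrable) hmem ?_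
  have hexp_mul : MemLp (fun t => (Set.Ioi a).indicator (fun t => exp (-k * t)) t * g t) 2 :=
    hg_top.mul (memLp_indicator_exp_neg hk a)
  refine (hexp_mul.sub (hmem.const_mul k)).ae_eq ?_
  filter_upwards [ae_deriv_expPrimitive_add (k := k) (a := a) hg.locallyIntegrable] with t ht
  rw [Pi.sub_apply, sub_eq_iff_eq_add, ht]
  rcases le_or_gt t a with hta | hta
  · rw [hg0 t hta, mul_zero, mul_zero]
  · rw [Set.indicator_of_mem (Set.mem_Ioi.2 hta)]

theorem IsWeakSolutionOff.integral_deriv_add_mul_mul_exp (hsol : IsWeakSolutionOff V a u)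
    (hV : MemLp V ⊤) (hu : IsH1 u) (hk : 0 < k) (hg : Integrable g) (hg_top : MemLp g ⊤)
    (hg0 : ∀ s ≤ a, g s = 0) :
    ∫ t, (deriv u t + k * u t) * (exp (-k * t) * g t) =
      -∫ t, (V t - k ^ 2) * (u t * expPrimitive k a g t) := by
  rw [← hsol.integral_deriv_add_mul hV hu (isH1_expPrimitive hk hg hg_top hg0)
    (expPrimitive_self k a g)]
  refine integral_congr_ae ?_
  filter_upwards [ae_deriv_expPrimitive_add (k := k) (a := a) hg.locallyIntegrable] with t ht
  rw [ht]

theorem IsWeakSolutionOff.ae_mul_deriv_add_mul_nonpos (hsol : IsWeakSolutionOff V a u)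
    (hV : MemLp V ⊤) (hu : IsH1 u) (hu0 : ∀ x, 0 ≤ u x) (hk : 0 < k)
    (hc : ∀ᵐ t, 0 ≤ c * (V t - k ^ 2)) :
    ∀ᵐ t, a < t → c * (deriv u t + k * u t) ≤ 0 := by
  let f : ℝ → ℝ := fun t => -c * ((deriv u t + k * u t) * exp (-k * t))
  have hint : IntegrableOn f (Set.Ioi a) := by
    have hexp := (memLp_indicator_iff_restrict measurableSet_Ioi).1 (memLp_indicator_exp_neg hk a)
    exact (((hu.memLp_deriv.add (hu.memLp.const_mul k)).restrict _).integrable_mul hexp).const_mul _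
  have hset (s : Set ℝ) (hs : MeasurableSet s) (hsfin : volume (s ∩ Set.Ioi a) < ⊤) :
      0 ≤ ∫ t in s ∩ Set.Ioi a, f t := by
    let g : ℝ → ℝ := (s ∩ Set.Ioi a).indicator fun _ => 1
    have hmeas : MeasurableSet (s ∩ Set.Ioi a) := hs.inter measurableSet_Ioi
    have hg0 : ∀ t ≤ a, g t = 0 := fun t ht =>
      Set.indicator_of_notMem (fun h => ht.not_gt h.2) _
    have hmem (p : ENNReal) : MemLp g p := memLp_indicator_const p hmeas 1 (.inr hsfin.ne)
    calc 0 ≤ ∫ t, c * (V t - k ^ 2) * (u t * expPrimitive k a g t) := by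
          refine integral_nonneg_of_ae ?_
          filter_upwards [hc] with t ht
          exact mul_nonneg ht (mul_nonneg (hu0 t) (expPrimitive_nonneg
            (Set.indicator_nonneg fun _ _ => zero_le_one) hg0 t))
      _ = -c * ∫ t, (deriv u t + k * u t) * (exp (-k * t) * g t) := by
          rw [hsol.integral_deriv_add_mul_mul_exp hV hu hk (memLp_one_iff_integrable.1 (hmem 1))
            (hmem ⊤) hg0, neg_mul_neg, ← integral_const_mul]
          simp only [mul_assoc]
      _ = ∫ t in s ∩ Set.Ioi a, f t := by
          rw [← integral_indicator hmeas, ← integral_const_mul]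
          refine integral_congr_ae (ae_of_all _ fun t => ?_)
          by_cases ht : t ∈ s ∩ Set.Ioi a
          · simp [f, g, ht]
          · simp [g, ht]
  have hf := (ae_restrict_iff' measurableSet_Ioi).1
    (ae_nonneg_restrict_of_forall_setIntegral_nonneg_inter hint hset)
  filter_upwards [hf] with t ht hat
  refine nonpos_of_mul_nonpos_left ?_ (exp_pos (-k * t))
  have hft : 0 ≤ f t := ht hat
  simp only [f] at hft
  linarith

theorem IsWeakSolutionOff.mul_le_mul_exp (hsol : IsWeakSolutionOff V a u) (hV : MemLp V ⊤)
    (hu : IsH1 u) (hu0 : ∀ x, 0 ≤ u x) (hk : 0 < k) (hc : ∀ᵐ t, 0 ≤ c * (V t - k ^ 2)) {x : ℝ}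
    (hx : a ≤ x) : c * u x ≤ c * u a * exp (-k * (x - a)) := by
  refine le_mul_exp_of_ae_deriv_add_mul_nonpos hx
    ((hu.absolutelyContinuousOnInterval a x).const_mul c) ?_
  filter_upwards [hsol.ae_mul_deriv_add_mul_nonpos hV hu hu0 hk hc] with t ht htx
  rw [deriv_const_mul_field]
  linarith [ht htx.1]

variable {v₀ v₁ : ℝ}

theorem IsWeakSolutionOff.ae_neg_deriv_bounds (hsol : IsWeakSolutionOff V a u) (hV : MemLp V ⊤)
    (hv₀ : 0 < v₀) (hV₀ : ∀ᵐ x, v₀ ≤ V x) (hV₁ : ∀ᵐ x, V x ≤ v₁) (hu : IsH1 u) (ha : 0 ≤ u a) :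
    ∀ᵐ x, a < x → √v₀ * (u a * exp (-√v₁ * (x - a))) ≤ -deriv u x ∧
      -deriv u x ≤ √v₁ * (u a * exp (-√v₀ * (x - a))) := by
  have hv₁ : 0 < v₁ := by
    obtain ⟨x, h₀, h₁⟩ := (hV₀.and hV₁).exists
    linarith
  have hu0 := hsol.nonneg hV (hV₀.mono fun _ h => hv₀.trans_le h) hu ha
  have hc₀ : ∀ᵐ x, 0 ≤ 1 * (V x - √v₀ ^ 2) := by
    filter_upwards [hV₀] with x hx
    rw [sq_sqrt hv₀.le]
    linarith
  have hc₁ : ∀ᵐ x, 0 ≤ -1 * (V x - √v₁ ^ 2) := by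
    filter_upwards [hV₁] with x hx
    rw [sq_sqrt hv₁.le]
    linarith
  filter_upwards [hsol.ae_mul_deriv_add_mul_nonpos hV hu hu0 (sqrt_pos.2 hv₀) hc₀,
    hsol.ae_mul_deriv_add_mul_nonpos hV hu hu0 (sqrt_pos.2 hv₁) hc₁] with x h₀ h₁ hx
  have hupper := hsol.mul_le_mul_exp hV hu hu0 (sqrt_pos.2 hv₀) hc₀ hx.le
  have hlower := hsol.mul_le_mul_exp hV hu hu0 (sqrt_pos.2 hv₁) hc₁ hx.le
  constructor
  · calc √v₀ * (u a * exp (-√v₁ * (x - a))) ≤ √v₀ * u x := by gcongr; linarith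
      _ ≤ -deriv u x := by linarith [h₀ hx]
  · calc -deriv u x ≤ √v₁ * u x := by linarith [h₁ hx]
      _ ≤ √v₁ * (u a * exp (-√v₀ * (x - a))) := by gcongr; linarith

theorem IsWeakSolutionOff.ae_sign_mul_deriv_bounds (hsol : IsWeakSolutionOff V a u)
    (hV : MemLp V ⊤) (hv₀ : 0 < v₀) (hV₀ : ∀ᵐ x, v₀ ≤ V x) (hV₁ : ∀ᵐ x, V x ≤ v₁) (hu : IsH1 u)
    (ha : 0 ≤ u a) :
    ∀ᵐ x, x ≠ a → √v₀ * (u a * exp (-√v₁ * |x - a|)) ≤ Real.sign (a - x) * deriv u x ∧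
      Real.sign (a - x) * deriv u x ≤ √v₁ * (u a * exp (-√v₀ * |x - a|)) := by
  have hneg := Measure.measurePreserving_neg (volume : Measure ℝ)
  have hae {p : ℝ → Prop} (hp : ∀ᵐ x, p x) : ∀ᵐ x, p (-x) := hneg.quasiMeasurePreserving.ae hp
  have hright := hsol.ae_neg_deriv_bounds hV hv₀ hV₀ hV₁ hu ha
  have hleft := hae <| hsol.comp_neg.ae_neg_deriv_bounds (hV.comp_measurePreserving hneg) hv₀
    (hae hV₀) (hae hV₁) hu.comp_neg (by rwa [neg_neg])
  filter_upwards [hright, hleft] with x hr hl hxa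
  rcases hxa.lt_or_gt with hlt | hgt
  · rw [Real.sign_of_pos (sub_pos.2 hlt), one_mul, abs_sub_comm, abs_of_pos (sub_pos.2 hlt)]
    have hdist : -x - -a = a - x := by ring
    simpa only [deriv_comp_neg, neg_neg, hdist] using hl (neg_lt_neg hlt)
  · rw [Real.sign_of_neg (sub_neg.2 hgt), neg_one_mul, abs_of_pos (sub_pos.2 hgt)]
    exact hr hgt

theorem minimizer_deriv_bounds_general (hV : MemLp V ⊤) (hpos : 0 < essInf V volume) (hu : IsH1 u)
    (ha : 0 ≤ u a) (hsol : IsWeakSolutionOff V a u) :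
    ∀ᵐ x, x ≠ a →
      essInf V volume / √(essSup V volume) * exp (-√(essSup V volume) * |x - a|) * u a ≤
          Real.sign (a - x) * deriv u x ∧
        Real.sign (a - x) * deriv u x ≤
          essSup V volume / √(essInf V volume) * exp (-√(essInf V volume) * |x - a|) * u a := by
  have hV₀ := ae_essInf_le_of_memLp_top hV
  have hV₁ := ae_le_essSup_of_memLp_top hV
  have hle : essInf V volume ≤ essSup V volume := by
    obtain ⟨x, h₀, h₁⟩ := (hV₀.and hV₁).exists
    exact h₀.trans h₁
  filter_upwards [hsol.ae_sign_mul_deriv_bounds hV hpos hV₀ hV₁ hu ha] with x hx hxa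
  obtain ⟨hlower, hupper⟩ := hx hxa
  rw [mul_comm (u a), ← mul_assoc] at hlower hupper
  refine ⟨le_trans ?_ hlower, hupper.trans ?_⟩ <;> gcongr
  · exact div_sqrt_le_sqrt hpos hle
  · exact sqrt_le_div_sqrt hpos hle

end WeakSolution

/-- **Bounds on the derivative of the minimizer.** For `V ∈ L^∞(ℝ)` with
`v₀ := ess inf V > 0`, `v₁ := ess sup V`, and `u_a` the minimizer of `‖·‖_V²` over `K_a`:
`(v₀/√v₁) e^{-√v₁ |x-a|} ≤ sgn(a-x)·u_a'(x) ≤ (v₁/√v₀) e^{-√v₀ |x-a|}`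
for a.e. `x ∈ ℝ∖{a}` (where `u_a'` denotes the a.e.-defined derivative of `u_a`). -/
theorem minimizer_deriv_bounds (V : ℝ → ℝ) (hV : MemLp V ⊤ (volume : Measure ℝ))
    (hpos : 0 < essInf V (volume : Measure ℝ)) (a : ℝ)
    (ua : ℝ → ℝ) (hua : InKa a ua)
    (hmin : ∀ u : ℝ → ℝ, InKa a u → IV V ua ≤ IV V u) :
    ∀ᵐ x : ℝ, x ≠ a →
      (essInf V (volume : Measure ℝ) / Real.sqrt (essSup V (volume : Measure ℝ)) *
          Real.exp (-(Real.sqrt (essSup V (volume : Measure ℝ))) * |x - a|)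
        ≤ Real.sign (a - x) * deriv ua x ∧
      Real.sign (a - x) * deriv ua x ≤
        essSup V (volume : Measure ℝ) / Real.sqrt (essInf V (volume : Measure ℝ)) *
          Real.exp (-(Real.sqrt (essInf V (volume : Measure ℝ))) * |x - a|)) := by
  have hV0 : ∀ᵐ x, 0 ≤ V x := (ae_essInf_le_of_memLp_top hV).mono fun _ h => hpos.le.trans h
  simpa only [hua.2.1, mul_one] using minimizer_deriv_bounds_general hV hpos hua.1
    (hua.2.1 ▸ zero_le_one) (isWeakSolutionOff_of_minimizer hV hV0 hua hmin)
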